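/- For the hard-limiter model with output probabilities p₊(θ) = ½(1 + erf((θ − α)/√2)) and p₋(θ) = ½(1 − erf((θ − α)/√2)), the exact Fisher information F(θ) = (dp₊/dθ)²/p₊(θ) + (dp₋/dθ)²/p₋(θ) coincides exactly with the moment-based lower bound F̃(θ) = (dμ(θ)/dθ)² / σ²(θ), where μ(θ) = erf((θ − α)/√2) and σ²(θ) = 1 − erf²((θ − α)/√2); both equal (2/π) · e^{−(θ−α)²} / (1 − erf²((θ − α)/√2)). -/

import Mathlib

open MeasureTheory Real

/-- The Gauss error function `erf t = (2/√π) ∫₀ᵗ e^{−u²} du`. -/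
noncomputable def erf (t : ℝ) : ℝ := (2 / Real.sqrt π) * ∫ u in (0 : ℝ)..t, Real.exp (-u ^ 2)

/-! The model has only two outputs, and every function on a two-point set is affine in the output
value. In particular the score is, so the Cauchy–Schwarz inequality behind the moment-based bound is
an equality: with output values `y₀ ≠ y₁` and probabilities `p₀ + p₁ = 1`, the Fisher information is
`p₀'² / (p₀ p₁)`, while `μ' = (y₀ - y₁) p₀'` and `σ² = (y₀ - y₁)² p₀ p₁`. The closed form is then
the chain rule for `erf`, which is strictly increasing with limits `±1`, so that `p₀, p₁ > 0`. -/

section FiniteOutput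

variable {ι : Type*} [Fintype ι]

/-- The Fisher information at `θ` of a model with finitely many outputs, where `p i t` is the
probability of output `i` under parameter `t`. -/
noncomputable def fisherInformation (p : ι → ℝ → ℝ) (θ : ℝ) : ℝ :=
  ∑ i, deriv (p i) θ ^ 2 / p i θ

/-- The mean at parameter `θ` of an output that takes the value `y i` with probability `p i θ`. -/
def outputMean (y : ι → ℝ) (p : ι → ℝ → ℝ) (θ : ℝ) : ℝ :=
  ∑ i, p i θ * y i

/-- The variance at parameter `θ` of an output that takes the value `y i` with probability
`p i θ`. -/
def outputVariance (y : ι → ℝ) (p : ι → ℝ → ℝ) (θ : ℝ) : ℝ :=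
  ∑ i, p i θ * (y i - outputMean y p θ) ^ 2

/-- The lower bound `μ'² / σ²` on the Fisher information given by the first two moments of the
output. -/
noncomputable def momentBound (y : ι → ℝ) (p : ι → ℝ → ℝ) (θ : ℝ) : ℝ :=
  deriv (outputMean y p) θ ^ 2 / outputVariance y p θ

end FiniteOutput

section TwoOutputs

variable {p : Fin 2 → ℝ → ℝ} {θ : ℝ}

lemma fisherInformation_fin_two (hp : ∀ t, p 0 t + p 1 t = 1) (h₀ : p 0 θ ≠ 0) (h₁ : p 1 θ ≠ 0) :
    fisherInformation p θ = deriv (p 0) θ ^ 2 / (p 0 θ * p 1 θ) := by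
  have deriv_p₁ : deriv (p 1) θ = -deriv (p 0) θ := by
    rw [show p 1 = fun t ↦ 1 - p 0 t from funext fun t ↦ eq_sub_of_add_eq' (hp t), deriv_const_sub]
  rw [fisherInformation, Fin.sum_univ_two, deriv_p₁, neg_sq, div_add_div _ _ h₀ h₁,
    mul_comm (p 0 θ) (deriv _ _ ^ 2), ← mul_add, add_comm, hp, mul_one]

lemma outputMean_fin_two (y : Fin 2 → ℝ) (hp : p 0 θ + p 1 θ = 1) :
    outputMean y p θ = y 1 + (y 0 - y 1) * p 0 θ := by
  rw [outputMean, Fin.sum_univ_two, eq_sub_of_add_eq' hp]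
  ring

lemma deriv_outputMean_fin_two (y : Fin 2 → ℝ) (hp : ∀ t, p 0 t + p 1 t = 1) :
    deriv (outputMean y p) θ = (y 0 - y 1) * deriv (p 0) θ := by
  have mean_eq : outputMean y p = fun t ↦ y 1 + (y 0 - y 1) * p 0 t :=
    funext fun t ↦ outputMean_fin_two y (hp t)
  rw [mean_eq, deriv_const_add, deriv_const_mul_field]

lemma outputVariance_fin_two (y : Fin 2 → ℝ) (hp : p 0 θ + p 1 θ = 1) :
    outputVariance y p θ = (y 0 - y 1) ^ 2 * (p 0 θ * p 1 θ) := by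
  rw [outputVariance, Fin.sum_univ_two, outputMean_fin_two y hp, eq_sub_of_add_eq' hp]
  ring

lemma fisherInformation_eq_momentBound_fin_two {y : Fin 2 → ℝ} (hy : y 0 ≠ y 1)
    (hp : ∀ t, p 0 t + p 1 t = 1) (h₀ : p 0 θ ≠ 0) (h₁ : p 1 θ ≠ 0) :
    fisherInformation p θ = momentBound y p θ := by
  rw [fisherInformation_fin_two hp h₀ h₁, momentBound, deriv_outputMean_fin_two y hp,
    outputVariance_fin_two y (hp θ), mul_pow,
    mul_div_mul_left _ _ (pow_ne_zero 2 (sub_ne_zero.mpr hy))]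

end TwoOutputs

lemma hasDerivAt_erf (t : ℝ) : HasDerivAt erf (2 / √π * exp (-t ^ 2)) t := by
  have integrand_continuous : Continuous fun u : ℝ ↦ exp (-u ^ 2) := by fun_prop
  exact (integrand_continuous.integral_hasStrictDerivAt 0 t).hasDerivAt.const_mul (2 / √π)

lemma strictMono_erf : StrictMono erf :=
  strictMono_of_deriv_pos fun t ↦ by
    rw [(hasDerivAt_erf t).deriv]
    positivity

lemma tendsto_erf_atTop : Filter.Tendsto erf Filter.atTop (nhds 1) := by
  have integrable_gaussian : Integrable fun u : ℝ ↦ exp (-u ^ 2) := by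
    simpa using integrable_exp_neg_mul_sq one_pos
  have integral_half_gaussian : ∫ u in Set.Ioi (0 : ℝ), exp (-u ^ 2) = √π / 2 := by
    simpa using integral_gaussian_Ioi 1
  have normalization : 2 / √π * ∫ u in Set.Ioi (0 : ℝ), exp (-u ^ 2) = 1 := by
    rw [integral_half_gaussian]
    field_simp
  rw [← normalization]
  exact (intervalIntegral_tendsto_integral_Ioi 0 integrable_gaussian.integrableOn
    Filter.tendsto_id).const_mul (2 / √π)

lemma erf_lt_one (t : ℝ) : erf t < 1 :=
  (strictMono_erf (lt_add_one t)).trans_le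
    (strictMono_erf.monotone.ge_of_tendsto tendsto_erf_atTop _)

lemma erf_neg (t : ℝ) : erf (-t) = -erf t := by
  have reflect : ∫ u in (0 : ℝ)..t, exp (-u ^ 2) = ∫ u in -t..0, exp (-u ^ 2) := by
    rw [← neg_zero, ← intervalIntegral.integral_comp_neg]
    simp only [neg_sq, neg_zero]
  rw [erf, erf, reflect, intervalIntegral.integral_symm, mul_neg]

lemma neg_one_lt_erf (t : ℝ) : -1 < erf t := by
  rw [neg_lt, ← erf_neg]
  exact erf_lt_one (-t)

lemma hasDerivAt_erf_sub_div (α s θ : ℝ) :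
    HasDerivAt (fun t ↦ erf ((t - α) / s)) (2 / √π * exp (-((θ - α) / s) ^ 2) * (1 / s)) θ :=
  (hasDerivAt_erf _).comp θ (((hasDerivAt_id θ).sub_const α).div_const s)

lemma deriv_erf_sub_div_sq (α s θ : ℝ) :
    deriv (fun t ↦ erf ((t - α) / s)) θ ^ 2 =
      4 / (π * s ^ 2) * exp (-(2 * ((θ - α) / s) ^ 2)) := by
  have exp_sq : exp (-((θ - α) / s) ^ 2) ^ 2 = exp (-(2 * ((θ - α) / s) ^ 2)) := by
    rw [← exp_nat_mul]
    push_cast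
    ring_nf
  rw [(hasDerivAt_erf_sub_div α s θ).deriv, mul_pow, mul_pow, exp_sq, div_pow, div_pow,
    sq_sqrt pi_pos.le]
  ring

lemma deriv_erf_sub_div_sqrt_two_sq (α θ : ℝ) :
    deriv (fun t ↦ erf ((t - α) / √2)) θ ^ 2 = 2 / π * exp (-(θ - α) ^ 2) := by
  rw [deriv_erf_sub_div_sq, div_pow, sq_sqrt zero_le_two, mul_div_cancel₀ _ two_ne_zero]
  ring

/-- **Tightness of the moment-based bound for the hard-limiter.**
The exact Fisher information `F(θ) = (p₊')²/p₊ + (p₋')²/p₋` of the hard-limiter output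
coincides with the moment-based lower bound `F̃(θ) = (μ')²/σ²`, where
`μ(θ) = erf((θ−α)/√2)` and `σ²(θ) = 1 − erf²((θ−α)/√2)`; both equal
`(2/π) e^{−(θ−α)²} / (1 − erf²((θ−α)/√2))`. -/
theorem hard_limiter_bound_is_tight (α θ : ℝ)
    (pp pm μ σ2 F Ftilde : ℝ → ℝ)
    (hpp : ∀ t, pp t = (1 / 2) * (1 + erf ((t - α) / Real.sqrt 2)))
    (hpm : ∀ t, pm t = (1 / 2) * (1 - erf ((t - α) / Real.sqrt 2)))
    (hμ : ∀ t, μ t = erf ((t - α) / Real.sqrt 2))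
    (hσ2 : ∀ t, σ2 t = 1 - (erf ((t - α) / Real.sqrt 2)) ^ 2)
    (hF : ∀ t, F t = (deriv pp t) ^ 2 / pp t + (deriv pm t) ^ 2 / pm t)
    (hFt : ∀ t, Ftilde t = (deriv μ t) ^ 2 / σ2 t) :
    F θ = Ftilde θ ∧
      F θ = (2 / π) * Real.exp (-(θ - α) ^ 2) / (1 - (erf ((θ - α) / Real.sqrt 2)) ^ 2) := by
  have prob_sum : ∀ t, pp t + pm t = 1 := fun t ↦ by rw [hpp, hpm]; ring
  have pp_pos : 0 < pp θ := by linarith [hpp θ, neg_one_lt_erf ((θ - α) / √2)]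
  have pm_pos : 0 < pm θ := by linarith [hpm θ, erf_lt_one ((θ - α) / √2)]
  have mean_eq : outputMean ![1, -1] ![pp, pm] = μ := by
    ext t
    simp only [outputMean, Fin.sum_univ_two, Matrix.cons_val_zero, Matrix.cons_val_one,
      hpp, hpm, hμ]
    ring
  have variance_eq : outputVariance ![1, -1] ![pp, pm] θ = σ2 θ := by
    simp only [outputVariance, Fin.sum_univ_two, Matrix.cons_val_zero, Matrix.cons_val_one,
      mean_eq, hpp, hpm, hμ, hσ2]
    ring
  have tight : F θ = Ftilde θ :=
    calc F θ = fisherInformation ![pp, pm] θ := by simp [fisherInformation, hF]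
      _ = momentBound ![1, -1] ![pp, pm] θ :=
        fisherInformation_eq_momentBound_fin_two (by norm_num) prob_sum pp_pos.ne' pm_pos.ne'
      _ = Ftilde θ := by rw [momentBound, mean_eq, variance_eq, hFt]
  refine ⟨tight, ?_⟩
  rw [tight, hFt, hσ2, funext hμ, deriv_erf_sub_div_sqrt_two_sq]
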